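/- arXiv:1411.1477 — 2 statements merged into one kernel-verified Lean document; each statement's English description precedes it below -/
import Mathlib

section
/- For all positive integers n, the double sum over integers i, j of binom(2n, n+i) * binom(2n, n+j) * |i^6 - j^6| equals (2 n^3 (11n^2 - 15n + 5) / (2n-1)) * binom(2n, n)^2. -/
/-- Binomial coefficient `n.choose k` extended to an integer lower index,
vanishing when `k < 0` (and, as usual, when `k > n`). -/
def ichoose (n : ℕ) (k : ℤ) : ℤ := if 0 ≤ k then (n.choose k.toNat : ℤ) else 0

/-- Weights of the folded sum. -/
def wgt (n : ℕ) (j : ℕ) : ℚ := ((2 * n).choose (n + j) : ℚ)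

/-- Multiplicity of `|i| = j`. -/
def mlt (j : ℕ) : ℚ := if j = 0 then 1 else 2

/-- First Gosper certificate. -/
def polyQ (n m : ℚ) : ℚ :=
  (-1/4 + 15/16*n - 15/16*n^2) + (-5/4*n + 15/8*n^2)*m + (5/4 - 15/8*n)*m^2 + 5/4*n*m^3
    - 5/4*m^4 + 1/2*m^5

/-- Mean of the sixth power. -/
def meanSix (n : ℚ) : ℚ := 1/2*n - 15/8*n^2 + 15/8*n^3

/-- Second Gosper certificate (numerator). -/
def polyP (n m : ℚ) : ℚ :=
  (-1 + 27/4*n - 27*n^2 + 235/4*n^3 - 119/2*n^4 + 22*n^5)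
   + (10*n - 35*n^2 + 39*n^3 - 14*n^4)*m + (-5*n + 23*n^2 - 35*n^3 + 14*n^4)*m^2
   + (-10*n + 24*n^2 - 8*n^3)*m^3 + (5*n - 12*n^2 + 4*n^3)*m^4

theorem wgt_succ (n m : ℕ) :
    ((n : ℚ) + m + 1) * wgt n (m + 1) = ((n : ℚ) - m) * wgt n m := by
  unfold wgt
  rcases le_or_gt m n with h | h
  · have := Nat.choose_succ_right_eq (2 * n) (n + m)
    have h2 : 2 * n - (n + m) = n - m := by omega
    rw [h2] at this
    have h3 := congrArg (Nat.cast : ℕ → ℚ) this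
    push_cast [Nat.cast_sub h] at h3
    rw [← add_assoc]
    linarith
  · rw [Nat.choose_eq_zero_of_lt (by omega), Nat.choose_eq_zero_of_lt (by omega)]
    simp

theorem sumG (n m : ℕ) :
    ∑ j ∈ Finset.range (m + 1), mlt j * wgt n j * ((j : ℚ) ^ 6 - meanSix n)
      = -2 * (polyQ n (m + 1) * (n + m + 1) * wgt n (m + 1)) := by
  induction m with
  | zero =>
    have := wgt_succ n 0
    simp [mlt] at *
    rw [mul_assoc (polyQ _ _), this]
    unfold polyQ meanSix
    ring
  | succ m ih =>
    rw [Finset.sum_range_succ, ih]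
    have := wgt_succ n (m + 1)
    push_cast at *
    rw [mul_assoc (polyQ _ (_ + 1 + 1)), mul_assoc (polyQ _ (_ + 1))]
    rw [show (n : ℚ) + (m + 1) + 1 = n + (m + 1) + 1 by ring, this]
    simp only [mlt]
    unfold polyQ meanSix
    simp
    ring

/-- Truncated folded double sum. -/
def dsum (n m : ℕ) : ℚ := ∑ i ∈ Finset.range m, ∑ j ∈ Finset.range m,
  mlt i * wgt n i * (mlt j * wgt n j) * |(i : ℚ) ^ 6 - (j : ℚ) ^ 6|

theorem dsum_succ (n m : ℕ) :
    dsum n (m + 1) = dsum n m + 2 * (mlt m * wgt n m) *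
      ∑ j ∈ Finset.range m, mlt j * wgt n j * ((m : ℚ) ^ 6 - (j : ℚ) ^ 6) := by
  unfold dsum
  simp only [Finset.sum_range_succ, Finset.sum_add_distrib]
  have h1 : ∀ j ∈ Finset.range m, |(m : ℚ) ^ 6 - (j : ℚ) ^ 6| = (m : ℚ) ^ 6 - (j : ℚ) ^ 6 := by
    intro j hj
    apply abs_of_nonneg
    have : (j : ℚ) ≤ m := by exact_mod_cast (Finset.mem_range.1 hj).le
    have := pow_le_pow_left₀ (by positivity) this 6
    linarith
  have h2 : ∑ j ∈ Finset.range m, mlt m * wgt n m * (mlt j * wgt n j) * |(m : ℚ) ^ 6 - (j : ℚ) ^ 6|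
      = (mlt m * wgt n m) *
      ∑ j ∈ Finset.range m, mlt j * wgt n j * ((m : ℚ) ^ 6 - (j : ℚ) ^ 6) := by
    rw [Finset.mul_sum]
    refine Finset.sum_congr rfl fun j hj => ?_
    rw [h1 j hj]; ring
  have h3 : ∑ j ∈ Finset.range m, mlt j * wgt n j * (mlt m * wgt n m) * |(j : ℚ) ^ 6 - (m : ℚ) ^ 6|
      = (mlt m * wgt n m) *
      ∑ j ∈ Finset.range m, mlt j * wgt n j * ((m : ℚ) ^ 6 - (j : ℚ) ^ 6) := by
    rw [Finset.mul_sum]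
    refine Finset.sum_congr rfl fun j hj => ?_
    rw [abs_sub_comm, h1 j hj]; ring
  rw [h2, h3]
  simp
  ring

theorem dsum_eq (n : ℕ) (hn : 2 ≤ n) (m : ℕ) :
    dsum n (m + 1) = -4 * (polyQ n (m + 1) * (n + m + 1) * wgt n (m + 1))
        * (∑ j ∈ Finset.range (m + 1), mlt j * wgt n j)
      - polyP n (m + 1) / (n * (n - 1) * (2 * n - 1)) * ((n + m + 1) * wgt n (m + 1)) ^ 2
      + 2 * (n : ℚ) ^ 3 * (11 * n ^ 2 - 15 * n + 5) / (2 * n - 1) * wgt n 0 ^ 2 := by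
  have hn' : (2 : ℚ) ≤ n := by exact_mod_cast hn
  have e1 : (n : ℚ) ≠ 0 := by linarith
  have e2 : (n : ℚ) - 1 ≠ 0 := by linarith
  have e3 : 2 * (n : ℚ) - 1 ≠ 0 := by linarith
  obtain ⟨u, hu⟩ : ∃ u : ℚ, u = (n * (n - 1) * (2 * n - 1) : ℚ)⁻¹ := ⟨_, rfl⟩
  have hu1 : u * (n * (n - 1) * (2 * n - 1) : ℚ) = 1 := by
    rw [hu]; exact inv_mul_cancel₀ (mul_ne_zero (mul_ne_zero e1 e2) e3)
  have hv : (2 * n - 1 : ℚ)⁻¹ = n * (n - 1) * u := by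
    apply inv_eq_of_mul_eq_one_right
    linear_combination hu1
  simp only [div_eq_mul_inv (_ : ℚ) (2 * (n : ℚ) - 1),
    div_eq_mul_inv (_ : ℚ) (n * (n - 1) * (2 * n - 1) : ℚ), ← hu, hv] at *
  clear hv hu
  induction m with
  | zero =>
    have := wgt_succ n 0
    simp only [mul_assoc (polyQ _ _)]
    rw [this]
    simp [mlt, dsum]
    unfold polyQ polyP
    have h := congrArg (fun t => (-4 * polyQ n 1 * n * wgt n 0 ^ 2) * t) hu1
    simp only [polyQ] at h
    linear_combination h
  | succ m ih =>
    have hS : ∑ j ∈ Finset.range (m + 1), mlt j * wgt n j * (((m + 1 : ℕ) : ℚ) ^ 6 - (j : ℚ) ^ 6)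
        = (((m + 1 : ℕ) : ℚ) ^ 6 - meanSix n) * (∑ j ∈ Finset.range (m + 1), mlt j * wgt n j)
          + 2 * (polyQ n (m + 1) * (n + m + 1) * wgt n (m + 1)) := by
      have := sumG n m
      rw [Finset.mul_sum]
      rw [show 2 * (polyQ n (m + 1) * (n + m + 1) * wgt n (m + 1)) =
        -∑ j ∈ Finset.range (m + 1), mlt j * wgt n j * ((j : ℚ) ^ 6 - meanSix n) by
          rw [this]; ring, ← Finset.sum_neg_distrib, ← Finset.sum_add_distrib]
      refine Finset.sum_congr rfl fun j _ => ?_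
      ring
    rw [dsum_succ, ih, hS, Finset.sum_range_succ _ (m + 1)]
    generalize ∑ j ∈ Finset.range (m + 1), mlt j * wgt n j = A
    have := wgt_succ n (m + 1)
    simp only [mul_assoc (polyQ _ _)]
    rw [this]
    have hm : mlt (m + 1) = 2 := by simp [mlt]
    rw [hm]
    generalize wgt n (m + 1) = w
    generalize wgt n 0 = w0
    unfold polyQ polyP meanSix
    push_cast
    generalize (m : ℚ) = x
    generalize (n : ℚ) = y at *
    have h := congrArg (fun t => (-(8 * (polyQ y (x + 1) * (y + x + 1)
      + polyQ y (x + 2) * (y - x - 1))) * w ^ 2) * t) hu1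
    simp only [polyQ] at h
    linear_combination h

theorem dsum_final (n : ℕ) (hn : 1 ≤ n) :
    dsum n (n + 1) = 2 * (n : ℚ) ^ 3 * (11 * n ^ 2 - 15 * n + 5) / (2 * n - 1)
          * ((2 * n).choose n : ℚ) ^ 2 := by
  rcases Nat.lt_or_ge 1 n with h | h
  · rw [dsum_eq n h]
    have : wgt n (n + 1) = 0 := by
      unfold wgt
      rw [Nat.choose_eq_zero_of_lt (by omega)]; simp
    rw [this]
    simp [wgt]
  · obtain rfl : n = 1 := by omega
    norm_num [dsum, Finset.sum_range_succ, mlt, wgt, Nat.choose]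

theorem fold_sum (N : ℕ) (f : ℤ → ℚ) (hf : ∀ i, f (-i) = f i) :
    ∑ i ∈ Finset.Icc (-(N : ℤ)) N, f i = ∑ j ∈ Finset.range (N + 1), mlt j * f j := by
  rw [Finset.sum_Icc_of_even_eq_range (f := f) hf, Finset.sum_range_succ', Finset.sum_range_succ']
  simp [mlt, Finset.mul_sum]
  ring

theorem ichoose_neg (n : ℕ) (i : ℤ) : ichoose (2 * n) (n + -i) = ichoose (2 * n) (n + i) := by
  have key : ∀ k : ℕ, ichoose (2 * n) (n + -(k : ℤ)) = ichoose (2 * n) (n + (k : ℤ)) := by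
    intro k
    unfold ichoose
    rw [if_pos (by omega : (0 : ℤ) ≤ n + k)]
    split_ifs with h
    · rw [← Nat.choose_symm (by omega)]
      congr 2
      omega
    · rw [Nat.choose_eq_zero_of_lt (by omega)]; simp
  rcases Int.eq_nat_or_neg i with ⟨k, rfl | rfl⟩
  · exact key k
  · rw [neg_neg]; exact (key k).symm

theorem ichoose_support (n : ℕ) (i : ℤ) (h : i ∉ Finset.Icc (-(n : ℤ)) n) :
    ichoose (2 * n) (n + i) = 0 := by
  unfold ichoose
  rw [Finset.mem_Icc] at h
  split_ifs with h1
  · rw [Nat.choose_eq_zero_of_lt (by omega)]; simp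
  · rfl

theorem ichoose_nat (n j : ℕ) : (ichoose (2 * n) (n + (j : ℤ)) : ℚ) = wgt n j := by
  unfold ichoose wgt
  rw [if_pos (by omega)]
  have : ((n : ℤ) + j).toNat = n + j := by omega
  rw [this]; simp

theorem stmt14 (n : ℕ) (hn : 1 ≤ n) :
    ∑ᶠ i : ℤ, ∑ᶠ j : ℤ,
        ((ichoose (2 * n) (n + i) : ℚ) * (ichoose (2 * n) (n + j) : ℚ)
          * |(i : ℚ) ^ 6 - (j : ℚ) ^ 6|)
      = 2 * (n : ℚ) ^ 3 * (11 * n ^ 2 - 15 * n + 5) / (2 * n - 1)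
          * ((2 * n).choose n : ℚ) ^ 2 := by
  have inner : ∀ i : ℤ, ∑ᶠ j : ℤ,
        ((ichoose (2 * n) (n + i) : ℚ) * (ichoose (2 * n) (n + j) : ℚ)
          * |(i : ℚ) ^ 6 - (j : ℚ) ^ 6|) = ∑ j ∈ Finset.range (n + 1), mlt j *
          ((ichoose (2 * n) (n + i) : ℚ) * wgt n j * |(i : ℚ) ^ 6 - (j : ℚ) ^ 6|) := by
    intro i
    rw [finsum_eq_sum_of_support_subset (s := Finset.Icc (-(n : ℤ)) n), fold_sum]
    · simp [ichoose_nat]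
    · intro j
      rw [ichoose_neg]
      push_cast
      rw [Even.neg_pow (by decide)]
    · intro j hj
      by_contra hc
      apply hj
      simp [ichoose_support n j hc]
  simp only [inner]
  rw [finsum_eq_sum_of_support_subset (s := Finset.Icc (-(n : ℤ)) n), fold_sum, ← dsum_final n hn]
  · unfold dsum
    refine Finset.sum_congr rfl fun i _ => ?_
    rw [Finset.mul_sum]
    refine Finset.sum_congr rfl fun j _ => ?_
    rw [ichoose_nat]
    push_cast
    ring
  · intro i
    rw [ichoose_neg]
    push_cast
    simp only [Even.neg_pow (show Even 6 by decide)]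
  · intro i hi
    by_contra hc
    apply hi
    simp [ichoose_support n i hc]
end

section
/- For all positive integers n, the double sum over integers i, j of binom(2n, n+i) * binom(2n, n+j) * |i^4 (i^2 - j^2)| equals (n^3 (10n^2 - 14n + 5) / (2n-1)) * binom(2n, n)^2. -/
/-- Weight `binom(2n, n+i)` as a rational number. -/
noncomputable def wt (n : ℕ) (i : ℤ) : ℚ := (ichoose (2 * n) (n + i) : ℚ)

lemma wt_nat (n k : ℕ) : wt n (k : ℤ) = ((2 * n).choose (n + k) : ℚ) := by
  unfold wt ichoose
  rw [if_pos (by positivity)]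
  have : ((n : ℤ) + (k : ℤ)).toNat = n + k := by omega
  rw [this]; simp

lemma wt_neg (n k : ℕ) : wt n (-(k : ℤ)) = wt n (k : ℤ) := by
  rw [wt_nat]
  unfold wt ichoose
  by_cases h : k ≤ n
  · rw [if_pos (by omega)]
    have : ((n : ℤ) + -(k : ℤ)).toNat = n - k := by omega
    rw [this, ← Nat.choose_symm (n := 2 * n) (k := n + k) (by omega)]
    have : 2 * n - (n + k) = n - k := by omega
    rw [this]; simp
  · rw [if_neg (by omega), Nat.choose_eq_zero_of_lt (by omega)]; simp

lemma wt_rec (n k : ℕ) :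
    ((n : ℚ) - k) * wt n (k : ℤ) = ((n : ℚ) + k + 1) * wt n ((k + 1 : ℕ) : ℤ) := by
  rw [wt_nat, wt_nat]
  by_cases h : k ≤ n
  · have := Nat.choose_succ_right_eq (2 * n) (n + k)
    have h2 : 2 * n - (n + k) = n - k := by omega
    rw [h2] at this
    have h3 : (((2 * n).choose (n + k + 1) * (n + k + 1) : ℕ) : ℚ)
      = (((2 * n).choose (n + k) * (n - k) : ℕ) : ℚ) := by rw [this]
    push_cast [Nat.cast_sub h] at h3
    rw [← add_assoc]
    linarith
  · rw [Nat.choose_eq_zero_of_lt (by omega), Nat.choose_eq_zero_of_lt (by omega)]; simp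

lemma wt_support (n : ℕ) (i : ℤ) (h : i ∉ Finset.Icc (-(n : ℤ)) n) : wt n i = 0 := by
  rw [Finset.mem_Icc] at h
  unfold wt ichoose
  split_ifs with h0
  · rw [Nat.choose_eq_zero_of_lt (by omega)]; simp
  · simp

lemma sum_Icc_succ (f : ℤ → ℚ) (k : ℕ) :
    ∑ i ∈ Finset.Icc (-((k + 1 : ℕ) : ℤ)) ((k + 1 : ℕ) : ℤ), f i
      = ∑ i ∈ Finset.Icc (-(k : ℤ)) (k : ℤ), f i
        + (f ((k + 1 : ℕ) : ℤ) + f (-((k + 1 : ℕ) : ℤ))) := by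
  have : Finset.Icc (-((k + 1 : ℕ) : ℤ)) ((k + 1 : ℕ) : ℤ)
      = insert ((k + 1 : ℕ) : ℤ) (insert (-((k + 1 : ℕ) : ℤ))
          (Finset.Icc (-(k : ℤ)) (k : ℤ))) := by
    ext x
    simp only [Finset.mem_insert, Finset.mem_Icc]
    omega
  rw [this, Finset.sum_insert, Finset.sum_insert]
  · ring
  · simp
  · simp only [Finset.mem_insert, Finset.mem_Icc]
    omega

/-- Truncated moments. -/
noncomputable def mom (n k m : ℕ) : ℚ := ∑ i ∈ Finset.Icc (-(k : ℤ)) (k : ℤ), wt n i * (i : ℚ) ^ m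

lemma mom_zero (n m : ℕ) : mom n 0 m = wt n 0 * 0 ^ m := by
  simp [mom]

lemma mom_succ (n k m : ℕ) (hm : Even m) :
    mom n (k + 1) m = mom n k m + 2 * wt n ((k + 1 : ℕ) : ℤ) * ((k : ℚ) + 1) ^ m := by
  unfold mom
  rw [sum_Icc_succ, wt_neg]
  push_cast
  rw [hm.neg_pow]
  ring

lemma mom_two (n k : ℕ) :
    2 * mom n k 2 = n * mom n k 0 - (2 * k + 1) * ((n - k) * wt n k) := by
  induction k with
  | zero => simp [mom_zero]
  | succ k ih =>
    rw [mom_succ _ _ _ (by decide), mom_succ _ _ _ (by decide)]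
    rw [wt_rec] at ih
    push_cast at *
    linear_combination ih

lemma mom_four (n k : ℕ) :
    2 * mom n k 4 = (3 * n - 3 / 2) * mom n k 2 + n / 4 * mom n k 0
      - 2 * (k + 1 / 2) ^ 3 * ((n - k) * wt n k) := by
  induction k with
  | zero => simp [mom_zero]; ring
  | succ k ih =>
    rw [mom_succ _ _ _ (by decide), mom_succ _ _ _ (by decide), mom_succ _ _ _ (by decide)]
    rw [wt_rec] at ih
    push_cast at *
    linear_combination ih

lemma mom_six (n k : ℕ) :
    2 * mom n k 6 = (5 * n - 5) * mom n k 4 + (5 / 2 * n - 5 / 8) * mom n k 2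
      + n / 16 * mom n k 0 - 2 * (k + 1 / 2) ^ 5 * ((n - k) * wt n k) := by
  induction k with
  | zero => simp [mom_zero]; ring
  | succ k ih =>
    rw [mom_succ _ _ _ (by decide), mom_succ _ _ _ (by decide), mom_succ _ _ _ (by decide),
      mom_succ _ _ _ (by decide)]
    rw [wt_rec] at ih
    push_cast at *
    linear_combination ih

/-- The summand. -/
noncomputable def summand (n : ℕ) (i j : ℤ) : ℚ :=
  wt n i * wt n j * |(i : ℚ) ^ 4 * ((i : ℚ) ^ 2 - (j : ℚ) ^ 2)|

/-- The sum over the square `[-k, k]²`. -/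
noncomputable def boxSum (n k : ℕ) : ℚ :=
  ∑ i ∈ Finset.Icc (-(k : ℤ)) (k : ℤ), ∑ j ∈ Finset.Icc (-(k : ℤ)) (k : ℤ), summand n i j

lemma sq_lt (k : ℕ) (j : ℤ) (hj : j ∈ Finset.Icc (-(k : ℤ)) (k : ℤ)) :
    (j : ℚ) ^ 2 ≤ ((k : ℚ) + 1) ^ 2 := by
  rw [Finset.mem_Icc] at hj
  have h1 : (-(k : ℚ)) ≤ j := by exact_mod_cast hj.1
  have h2 : (j : ℚ) ≤ k := by exact_mod_cast hj.2
  nlinarith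

lemma sq_succ (n k : ℕ) :
    boxSum n (k + 1) = boxSum n k + 2 * wt n ((k + 1 : ℕ) : ℤ) *
      (((k : ℚ) + 1) ^ 6 * mom n k 0 - ((k : ℚ) + 1) ^ 4 * mom n k 2
        + ((k : ℚ) + 1) ^ 2 * mom n k 4 - mom n k 6) := by
  unfold boxSum
  rw [sum_Icc_succ]
  simp only [sum_Icc_succ (summand n _)]
  rw [Finset.sum_add_distrib]
  have hc : ∀ i : ℤ, i ^ 2 = ((k + 1 : ℕ) : ℤ) ^ 2 → ∀ j : ℤ, j ^ 2 = ((k + 1 : ℕ) : ℤ) ^ 2 →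
      summand n i j = 0 := by
    intro i hi j hj
    have : (i : ℚ) ^ 2 = (j : ℚ) ^ 2 := by exact_mod_cast hi.trans hj.symm
    simp [summand, this]
  rw [hc _ rfl _ rfl, hc _ rfl _ (neg_sq _), hc _ (neg_sq _) _ rfl, hc _ (neg_sq _) _ (neg_sq _)]
  have h1 : ∑ i ∈ Finset.Icc (-(k : ℤ)) (k : ℤ),
      (summand n i ((k + 1 : ℕ) : ℤ) + summand n i (-((k + 1 : ℕ) : ℤ)))
      = 2 * wt n ((k + 1 : ℕ) : ℤ) * (((k : ℚ) + 1) ^ 2 * mom n k 4 - mom n k 6) := by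
    unfold mom
    rw [Finset.mul_sum, ← Finset.sum_sub_distrib, Finset.mul_sum]
    refine Finset.sum_congr rfl fun i hi => ?_
    have := sq_lt k i hi
    unfold summand
    rw [wt_neg]
    push_cast
    rw [neg_sq, abs_of_nonpos (mul_nonpos_of_nonneg_of_nonpos (by positivity) (by linarith))]
    ring
  have h2 : ∀ e : ℤ, e ^ 2 = ((k + 1 : ℕ) : ℤ) ^ 2 → wt n e = wt n ((k + 1 : ℕ) : ℤ) →
      ∑ j ∈ Finset.Icc (-(k : ℤ)) (k : ℤ), summand n e j
      = wt n ((k + 1 : ℕ) : ℤ) * (((k : ℚ) + 1) ^ 6 * mom n k 0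
          - ((k : ℚ) + 1) ^ 4 * mom n k 2) := by
    intro e he hw
    unfold mom
    rw [Finset.mul_sum, Finset.mul_sum, ← Finset.sum_sub_distrib, Finset.mul_sum]
    refine Finset.sum_congr rfl fun i hi => ?_
    have := sq_lt k i hi
    have he' : (e : ℚ) ^ 2 = ((k : ℚ) + 1) ^ 2 := by exact_mod_cast he
    have he4 : (e : ℚ) ^ 4 = ((k : ℚ) + 1) ^ 4 := by
      rw [show 4 = 2 * 2 from rfl, pow_mul, he', pow_mul]
    unfold summand
    rw [hw, he', he4, abs_of_nonneg (mul_nonneg (by positivity) (by linarith))]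
    ring
  rw [h1, h2 _ rfl rfl, h2 _ (neg_sq _) (wt_neg _ _)]
  ring

lemma sq_closed (n k : ℕ) :
    (n : ℚ) * (n - 1) * (2 * n - 1) * boxSum n k
      = (n : ℚ) * (n - 1) * (n ^ 3 * (10 * n ^ 2 - 14 * n + 5)) * (wt n 0) ^ 2
      + (n : ℚ) * (n - 1) * (2 * n - 1) *
          ((-1 / 2 + 15 / 8 * n - 15 / 8 * n ^ 2) + (11 / 4 * n - 15 / 4 * n ^ 2) * k
            + (5 / 2 - 3 * n) * k ^ 2 - 2 * n * k ^ 3 - 5 / 2 * k ^ 4 - k ^ 5)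
          * ((n - k) * wt n k) * mom n k 0
      + ((1 / 2 - 27 / 8 * n + 27 / 2 * n ^ 2 - 227 / 8 * n ^ 3 + 111 / 4 * n ^ 4 - 10 * n ^ 5)
          + (19 / 4 * n - 59 / 4 * n ^ 2 + 15 * n ^ 3 - 5 * n ^ 4) * k
          + (11 / 4 * n - 39 / 4 * n ^ 2 + 13 * n ^ 3 - 5 * n ^ 4) * k ^ 2
          + (-4 * n + 10 * n ^ 2 - 4 * n ^ 3) * k ^ 3
          + (-2 * n + 5 * n ^ 2 - 2 * n ^ 3) * k ^ 4) * ((n - k) * wt n k) ^ 2 := by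
  induction k with
  | zero =>
    simp [mom_zero, boxSum, summand]
    ring
  | succ k ih =>
    have m2 := mom_two n k
    have m4 := mom_four n k
    have m6 := mom_six n k
    rw [sq_succ, mom_succ _ _ _ (by decide)]
    rw [wt_rec] at ih m2 m4 m6
    have e2 : mom n k 2 = (n * mom n k 0 - (2 * k + 1) *
      (((n : ℚ) + k + 1) * wt n ((k + 1 : ℕ) : ℤ))) / 2 := by linarith
    rw [e2] at m4 m6
    have e4 := eq_div_of_mul_eq (two_ne_zero) ((mul_comm _ _).trans m4)
    rw [e4] at m6
    have e6 := eq_div_of_mul_eq (two_ne_zero) ((mul_comm _ _).trans m6)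
    rw [e2, e4, e6]
    push_cast at *
    linear_combination ih

theorem stmt19 (n : ℕ) (hn : 1 ≤ n) :
    ∑ᶠ i : ℤ, ∑ᶠ j : ℤ,
        ((ichoose (2 * n) (n + i) : ℚ) * (ichoose (2 * n) (n + j) : ℚ)
          * |(i : ℚ) ^ 4 * ((i : ℚ) ^ 2 - (j : ℚ) ^ 2)|)
      = (n : ℚ) ^ 3 * (10 * n ^ 2 - 14 * n + 5) / (2 * n - 1)
          * ((2 * n).choose n : ℚ) ^ 2 := by
  have hsq : ∑ᶠ i : ℤ, ∑ᶠ j : ℤ,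
        ((ichoose (2 * n) (n + i) : ℚ) * (ichoose (2 * n) (n + j) : ℚ)
          * |(i : ℚ) ^ 4 * ((i : ℚ) ^ 2 - (j : ℚ) ^ 2)|) = boxSum n n := by
    change ∑ᶠ i : ℤ, ∑ᶠ j : ℤ, summand n i j = boxSum n n
    have hin : ∀ i : ℤ, ∑ᶠ j : ℤ, summand n i j
        = ∑ j ∈ Finset.Icc (-(n : ℤ)) (n : ℤ), summand n i j := by
      intro i
      apply finsum_eq_sum_of_support_subset
      intro j hj
      by_contra h
      exact hj (by simp [summand, wt_support n j h])
    simp only [hin]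
    apply finsum_eq_sum_of_support_subset
    intro i hi
    by_contra h
    exact hi (by simp [summand, wt_support n i h])
  rw [hsq]
  have hw : wt n 0 = ((2 * n).choose n : ℚ) := by simpa using wt_nat n 0
  rw [← hw]
  have hn' : (1 : ℚ) ≤ n := by exact_mod_cast hn
  have h2 : (2 * n - 1 : ℚ) ≠ 0 := by linarith
  rcases eq_or_lt_of_le hn with h | h
  · subst h
    have := sq_succ 1 0
    rw [zero_add] at this
    rw [this]
    have h1 : wt 1 1 = 1 := by simpa using wt_nat 1 1
    have h0 : wt 1 0 = 2 := by simpa using wt_nat 1 0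
    simp [mom_zero, boxSum, summand, h1, h0]
    norm_num
  · have h1 : (n : ℚ) * (n - 1) ≠ 0 := by
      have : (1 : ℚ) < n := by exact_mod_cast h
      exact mul_ne_zero (by linarith) (by linarith)
    have := sq_closed n n
    rw [div_mul_eq_mul_div, eq_div_iff h2]
    apply mul_left_cancel₀ h1
    linear_combination this
end
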